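/- Let x₁,…,x_n ∈ ℝ^d and let q_n = (1/n) Σ_{i=1}^n k_ε(· − x_i) be the corresponding equal-weight Gaussian mixture, and suppose D := KL(q_n‖μ*) < ∞. Then for every α ∈ [0,1], the mixtures obtained by adding one component with weight α satisfy ∫_{ℝ^d} KL((1−α) q_n + α k_ε(· − m) ‖ μ*) dP(m) ≤ (1−α) D + α² C². -/

import Mathlib

/-!
Write `q = q_n`, `μ = μ*`, `k = k_ε(x - m)` and `f = (1 - α) q + α k`. Two applications of the
elementary bound on the logarithm, `log (f / q) ≤ f / q - 1` for the part `(1 - α) q` of the mass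
and `log (f / μ) ≤ f / μ - 1` for the part `α k`, give the pointwise estimate
(`mixture_log_le`)

  `f log (f / μ) ≤ (1 - α) q log (q / μ) + α (1 - α) (q k / μ - q) + α² k² / μ`.

Since `∫ k dP(m) = μ`, the middle term has zero mean under `P`, so integrating over `m` and `x`
gives the result. Exchanging the two integrals needs the left side to be integrable on the
product space: it lies between `f - μ` and the right side, both of which are integrable.
-/

open MeasureTheory Real

noncomputable def kG (d : ℕ) (ε : ℝ) (x : EuclideanSpace ℝ (Fin d)) : ℝ :=
  (2 * π * ε ^ 2) ^ (-(d : ℝ) / 2) * Real.exp (-‖x‖ ^ 2 / (2 * ε ^ 2))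

lemma kG_pos (d : ℕ) {ε : ℝ} (hε : 0 < ε) (x : EuclideanSpace ℝ (Fin d)) : 0 < kG d ε x := by
  unfold kG
  positivity

lemma kG_continuous (d : ℕ) (ε : ℝ) : Continuous (kG d ε) := by
  unfold kG
  fun_prop

lemma kG_le (d : ℕ) {ε : ℝ} (hε : 0 < ε) (x : EuclideanSpace ℝ (Fin d)) :
    kG d ε x ≤ kG d ε 0 := by
  unfold kG
  gcongr
  simp

lemma kG_integrable (d : ℕ) {ε : ℝ} (hε : 0 < ε) : Integrable (kG d ε) := by
  have h : Integrable
      (fun x : EuclideanSpace ℝ (Fin d) => Real.exp (-(1 / (2 * ε ^ 2)) * ‖x‖ ^ 2)) := by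
    -- The Bochner integral of a non-integrable function is `0`, while this one is positive.
    apply Integrable.of_integral_ne_zero
    rw [GaussianFourier.integral_rexp_neg_mul_sq_norm (by positivity)]
    positivity
  unfold kG
  refine (h.const_mul ((2 * π * ε ^ 2) ^ (-(d : ℝ) / 2))).congr
    (Filter.Eventually.of_forall fun x => ?_)
  simp only
  congr 2
  ring

/-- The pointwise estimate behind the induction step. -/
lemma mixture_log_le {α q k u : ℝ} (hα : α ∈ Set.Icc (0 : ℝ) 1) (hq : 0 < q) (hk : 0 < k)
    (hu : 0 < u) :
    ((1 - α) * q + α * k) * Real.log (((1 - α) * q + α * k) / u) ≤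
      (1 - α) * (q * Real.log (q / u)) + α * (1 - α) * (q * k / u - q) +
        α ^ 2 * (k ^ 2 / u) := by
  obtain ⟨h0, h1⟩ := hα
  have h1' : 0 ≤ 1 - α := by linarith
  set f := (1 - α) * q + α * k with hf
  have hfpos : 0 < f := by
    rcases h0.eq_or_lt with rfl | h
    · simpa [hf] using hq
    · have := mul_nonneg h1' hq.le
      positivity
  have e1 : Real.log (f / u) ≤ f / u - 1 := Real.log_le_sub_one_of_pos (by positivity)
  have e2 : Real.log (f / u) ≤ Real.log (q / u) + (f / q - 1) := by
    have h := Real.log_le_sub_one_of_pos (x := f / q) (by positivity)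
    rw [Real.log_div hfpos.ne' hq.ne'] at h
    rw [Real.log_div hfpos.ne' hu.ne', Real.log_div hq.ne' hu.ne']
    linarith
  have e3 := mul_le_mul_of_nonneg_left e1 (mul_nonneg h0 hk.le)
  have e4 := mul_le_mul_of_nonneg_left e2 (mul_nonneg h1' hq.le)
  have e5 : (1 - α) * q * (Real.log (q / u) + (f / q - 1)) + α * k * (f / u - 1) =
      (1 - α) * (q * Real.log (q / u)) + α * (1 - α) * (q * k / u - q) +
        α ^ 2 * (k ^ 2 / u) - α ^ 2 * k := by
    rw [hf]
    field_simp
    ring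
  have e6 : 0 ≤ α ^ 2 * k := by positivity
  calc f * Real.log (f / u)
      = (1 - α) * q * Real.log (f / u) + α * k * Real.log (f / u) := by rw [hf]; ring
    _ ≤ _ := by linarith

/-- The lower bound `f log (f / u) ≥ f - u`, used to dominate the KL integrand from below. -/
lemma sub_le_mul_log_div {f u : ℝ} (hf : 0 < f) (hu : 0 < u) :
    f - u ≤ f * Real.log (f / u) := by
  have h := Real.one_sub_inv_le_log_of_pos (x := f / u) (by positivity)
  calc f - u = f * (1 - (f / u)⁻¹) := by field_simp
    _ ≤ _ := by gcongr

/-- one-step induction inequality: adding one component with weight `α`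
to the mixture `q_n` and averaging its location over `P` improves the KL divergence:
`∫ KL((1-α) q_n + α k_ε(·-m) ‖ μ*) dP(m) ≤ (1-α) D + α² C²`. -/
theorem stmt_2 (d : ℕ) (hd : 1 ≤ d) (ε : ℝ) (hε : 0 < ε)
    (P : Measure (EuclideanSpace ℝ (Fin d))) [IsProbabilityMeasure P]
    (μstar : EuclideanSpace ℝ (Fin d) → ℝ)
    (hμstar : ∀ x, μstar x = ∫ w, kG d ε (x - w) ∂P)
    (hpos : ∀ x, 0 < μstar x)
    (C2 : ℝ)
    (hC2 : C2 = ∫ x, (∫ m, (kG d ε (x - m)) ^ 2 ∂P) / μstar x)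
    (hC2fin : Integrable (fun x => (∫ m, (kG d ε (x - m)) ^ 2 ∂P) / μstar x))
    (n : ℕ) (hn : 1 ≤ n)
    (xs : Fin n → EuclideanSpace ℝ (Fin d))
    (qn : EuclideanSpace ℝ (Fin d) → ℝ)
    (hqn : ∀ x, qn x = (1 / n : ℝ) * ∑ i, kG d ε (x - xs i))
    (D : ℝ)
    (hD : D = ∫ x, qn x * Real.log (qn x / μstar x))
    (hDfin : Integrable (fun x => qn x * Real.log (qn x / μstar x)))
    (α : ℝ) (hα : α ∈ Set.Icc (0 : ℝ) 1) :
    (∫ m, (∫ x, ((1 - α) * qn x + α * kG d ε (x - m)) *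
        Real.log (((1 - α) * qn x + α * kG d ε (x - m)) / μstar x)) ∂P) ≤
      (1 - α) * D + α ^ 2 * C2 := by
  have hk := kG_pos d hε
  have hkc := kG_continuous d ε
  have hkint := kG_integrable d hε
  have hkm : Measurable (fun z : EuclideanSpace ℝ (Fin d) × EuclideanSpace ℝ (Fin d) =>
      kG d ε (z.1 - z.2)) := by
    have : Continuous (fun z : EuclideanSpace ℝ (Fin d) × EuclideanSpace ℝ (Fin d) =>
      kG d ε (z.1 - z.2)) := by fun_prop
    exact this.measurable
  have hkP : ∀ x, Integrable (fun m => kG d ε (x - m)) P := fun x => by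
    refine Integrable.of_bound (C := kG d ε 0) ?_ ?_
    · exact (by fun_prop : Continuous fun m => kG d ε (x - m)).aestronglyMeasurable
    · refine Filter.Eventually.of_forall fun m => ?_
      rw [Real.norm_of_nonneg (hk _).le]
      exact kG_le d hε _
  have hk2P : ∀ x, Integrable (fun m => (kG d ε (x - m)) ^ 2) P := fun x => by
    refine Integrable.of_bound (C := kG d ε 0 ^ 2) ?_ ?_
    · exact (by fun_prop : Continuous fun m => (kG d ε (x - m)) ^ 2).aestronglyMeasurable
    · refine Filter.Eventually.of_forall fun m => ?_
      rw [Real.norm_of_nonneg (by positivity)]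
      exact pow_le_pow_left₀ (hk _).le (kG_le d hε _) 2
  have hum : Measurable μstar := by
    rw [funext hμstar]
    exact (hkm.stronglyMeasurable.integral_prod_right').measurable
  have hqc : Continuous qn := by
    rw [funext hqn]
    fun_prop
  have hqpos : ∀ x, 0 < qn x := fun x => by
    have : Nonempty (Fin n) := ⟨⟨0, hn⟩⟩
    have hn' : (0 : ℝ) < n := by exact_mod_cast hn
    have : 0 < ∑ i, kG d ε (x - xs i) :=
      Finset.sum_pos (fun i _ => hk _) Finset.univ_nonempty
    rw [hqn]
    positivity
  have hqint : Integrable qn := by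
    rw [funext hqn]
    exact (integrable_finsetSum _ fun i _ => hkint.comp_sub_right (xs i)).const_mul _
  have hfpos : ∀ x m, 0 < (1 - α) * qn x + α * kG d ε (x - m) := fun x m => by
    have h0 := hα.1
    have h1 : 0 ≤ 1 - α := by linarith [hα.2]
    rcases h0.eq_or_lt with h | h
    · simpa [← h] using hqpos x
    · have := mul_nonneg h1 (hqpos x).le
      have := mul_pos h (hk (x - m))
      linarith
  have ik : Integrable (fun z : EuclideanSpace ℝ (Fin d) × EuclideanSpace ℝ (Fin d) =>
      kG d ε (z.1 - z.2)) (volume.prod P) := by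
    rw [integrable_prod_iff' hkm.aestronglyMeasurable]
    refine ⟨Filter.Eventually.of_forall fun m => hkint.comp_sub_right m, ?_⟩
    -- By translation invariance the inner integral does not depend on `m`.
    simp only [integral_sub_right_eq_self (fun x => ‖kG d ε x‖)]
    exact integrable_const _
  have iu : Integrable μstar := by
    rw [funext hμstar]
    exact ik.integral_prod_left
  -- Averaging the cross term `q k / μ` over `m` gives back `q`.
  have hqk : ∀ x, ∫ m, qn x * kG d ε (x - m) / μstar x ∂P = qn x := fun x => by
    rw [integral_div, integral_const_mul, ← hμstar, mul_div_cancel_right₀ _ (hpos x).ne']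
  have iqk : Integrable (fun z : EuclideanSpace ℝ (Fin d) × EuclideanSpace ℝ (Fin d) =>
      qn z.1 * kG d ε (z.1 - z.2) / μstar z.1) (volume.prod P) := by
    have hm : Measurable (fun z : EuclideanSpace ℝ (Fin d) × EuclideanSpace ℝ (Fin d) =>
        qn z.1 * kG d ε (z.1 - z.2) / μstar z.1) :=
      ((hqc.measurable.comp measurable_fst).mul hkm).div (hum.comp measurable_fst)
    refine (integrable_prod_iff hm.aestronglyMeasurable).2
      ⟨Filter.Eventually.of_forall fun x => ((hkP x).const_mul (qn x)).div_const (μstar x), ?_⟩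
    refine hqint.congr (Filter.Eventually.of_forall fun x => ?_)
    simp only
    rw [← hqk x]
    congr 1
    ext m
    rw [hqk x, Real.norm_of_nonneg (div_nonneg (mul_nonneg (hqpos x).le (hk _).le) (hpos x).le)]
  have ik2 : Integrable (fun z : EuclideanSpace ℝ (Fin d) × EuclideanSpace ℝ (Fin d) =>
      kG d ε (z.1 - z.2) ^ 2 / μstar z.1) (volume.prod P) := by
    have hm : Measurable (fun z : EuclideanSpace ℝ (Fin d) × EuclideanSpace ℝ (Fin d) =>
        kG d ε (z.1 - z.2) ^ 2 / μstar z.1) :=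
      (hkm.pow_const 2).div (hum.comp measurable_fst)
    refine (integrable_prod_iff hm.aestronglyMeasurable).2
      ⟨Filter.Eventually.of_forall fun x => (hk2P x).div_const (μstar x), ?_⟩
    refine hC2fin.congr (Filter.Eventually.of_forall fun x => ?_)
    simp only
    rw [← integral_div]
    congr 1
    ext m
    rw [Real.norm_of_nonneg (div_nonneg (by positivity) (hpos x).le)]
  have iq := hqint.comp_fst P
  have iA := (hDfin.comp_fst P).const_mul (1 - α)
  have iB := (iqk.sub iq).const_mul (α * (1 - α))
  have iC := ik2.const_mul (α ^ 2)
  have iL := ((iq.const_mul (1 - α)).add (ik.const_mul α)).sub (iu.comp_fst P)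
  have iF : Integrable (fun z : EuclideanSpace ℝ (Fin d) × EuclideanSpace ℝ (Fin d) =>
      ((1 - α) * qn z.1 + α * kG d ε (z.1 - z.2)) *
        Real.log (((1 - α) * qn z.1 + α * kG d ε (z.1 - z.2)) / μstar z.1))
      (volume.prod P) := by
    have hfm : Measurable (fun z : EuclideanSpace ℝ (Fin d) × EuclideanSpace ℝ (Fin d) =>
        (1 - α) * qn z.1 + α * kG d ε (z.1 - z.2)) :=
      ((hqc.measurable.comp measurable_fst).const_mul _).add (hkm.const_mul _)
    refine integrable_of_le_of_le
      (hfm.mul (Real.measurable_log.comp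
        (hfm.div (hum.comp measurable_fst)))).aestronglyMeasurable
      (Filter.Eventually.of_forall fun z => ?_) (Filter.Eventually.of_forall fun z => ?_)
      iL ((iA.add iB).add iC)
    · exact sub_le_mul_log_div (hfpos z.1 z.2) (hpos z.1)
    · exact mixture_log_le hα (hqpos z.1) (hk (z.1 - z.2)) (hpos z.1)
  have vA : ∫ z, qn z.1 * Real.log (qn z.1 / μstar z.1) ∂(volume.prod P) = D := by
    rw [integral_prod _ (hDfin.comp_fst P), hD]
    simp
  have vq : ∫ z, qn z.1 ∂(volume.prod P) = ∫ x, qn x := by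
    rw [integral_prod _ iq]
    simp
  have vqk : ∫ z, qn z.1 * kG d ε (z.1 - z.2) / μstar z.1 ∂(volume.prod P) = ∫ x, qn x := by
    rw [integral_prod _ iqk]
    simp only [hqk]
  have vC : ∫ z, kG d ε (z.1 - z.2) ^ 2 / μstar z.1 ∂(volume.prod P) = C2 := by
    rw [integral_prod _ ik2, hC2]
    simp only [integral_div]
  rw [← integral_prod_symm _ iF]
  refine (integral_mono iF ((iA.add iB).add iC) fun z =>
    mixture_log_le hα (hqpos z.1) (hk (z.1 - z.2)) (hpos z.1)).trans (le_of_eq ?_)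
  rw [integral_add' (iA.add iB) iC, integral_add' iA iB, integral_const_mul,
    integral_const_mul, integral_const_mul, vA, vC]
  simp only [Pi.sub_apply]
  rw [integral_sub iqk iq, vq, vqk]
  ring
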